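/- Let H_c and E be m×n real matrices with spectral norms ‖H_c‖ ≤ β and ‖E‖ ≤ ρ, let Σ be an n×n real positive-definite matrix, set H := H_c + E, Ω_c := I_m + H_cΣH_cᵀ, and Ω_H := I_m + HΣHᵀ. Then for every η' > 0 and every y ∈ ℝ^m satisfying (1/m)·yᵀΩ_c⁻¹y > 1 − η', one has yᵀΩ_H⁻¹y ≥ m · max(1 − η', 0) / (1 + ρ(ρ + 2β) · λ_max(Σ)). -/

import Mathlib

open Matrix

/-- The spectral (operator) norm of a real matrix:
`‖M‖ = max over vectors x with ‖x‖₂ ≤ 1 of ‖M x‖₂`. -/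
noncomputable def specNorm {m n : ℕ} (M : Matrix (Fin m) (Fin n) ℝ) : ℝ :=
  sSup {c : ℝ | ∃ x : Fin n → ℝ,
    Real.sqrt (∑ i, x i ^ 2) ≤ 1 ∧ c = Real.sqrt (∑ i, (M *ᵥ x) i ^ 2)}

section aux
open scoped Matrix.Norms.L2Operator

lemma specNorm_bdd {m n : ℕ} (M : Matrix (Fin m) (Fin n) ℝ) :
    BddAbove {c : ℝ | ∃ x : Fin n → ℝ,
      Real.sqrt (∑ i, x i ^ 2) ≤ 1 ∧ c = Real.sqrt (∑ i, (M *ᵥ x) i ^ 2)} := by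
  refine ⟨‖M‖, ?_⟩
  rintro c ⟨x, hx, rfl⟩
  have h := M.l2_opNorm_mulVec (WithLp.toLp 2 x)
  rw [EuclideanSpace.norm_eq, EuclideanSpace.norm_eq] at h
  simp only [Real.norm_eq_abs, sq_abs] at h
  calc _ ≤ ‖M‖ * Real.sqrt (∑ i, x i ^ 2) := h
    _ ≤ ‖M‖ * 1 := by gcongr
    _ = _ := mul_one _

end aux

lemma specNorm_nonneg' {m n : ℕ} (M : Matrix (Fin m) (Fin n) ℝ) : 0 ≤ specNorm M := by
  apply Real.sSup_nonneg
  rintro c ⟨x, hx, rfl⟩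
  exact Real.sqrt_nonneg _

lemma dot_self_eq {n : ℕ} (x : Fin n → ℝ) : x ⬝ᵥ x = ∑ i, x i ^ 2 := by
  simp [dotProduct, sq]

lemma specNorm_mulVec {m n : ℕ} (M : Matrix (Fin m) (Fin n) ℝ) (b : ℝ) (hb : specNorm M ≤ b)
    (x : Fin n → ℝ) : (M *ᵥ x) ⬝ᵥ (M *ᵥ x) ≤ b ^ 2 * (x ⬝ᵥ x) := by
  have hb0 : 0 ≤ b := (specNorm_nonneg' M).trans hb
  have hx0 : 0 ≤ x ⬝ᵥ x := by rw [dot_self_eq]; positivity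
  rcases hx0.eq_or_lt with h | h
  · have : x = 0 := dotProduct_self_eq_zero.mp h.symm
    subst this
    simp
  · set r := Real.sqrt (x ⬝ᵥ x) with hr
    have hr0 : 0 < r := Real.sqrt_pos.mpr h
    have hr2 : r ^ 2 = x ⬝ᵥ x := Real.sq_sqrt hx0
    have key : Real.sqrt (∑ i, (M *ᵥ (r⁻¹ • x)) i ^ 2) ≤ b := by
      refine le_trans (le_csSup (specNorm_bdd M) ⟨r⁻¹ • x, ?_, rfl⟩) hb
      rw [← dot_self_eq, smul_dotProduct, dotProduct_smul, ← hr2, smul_eq_mul, smul_eq_mul]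
      rw [Real.sqrt_le_left zero_le_one]
      apply le_of_eq
      field_simp
    rw [← dot_self_eq, Real.sqrt_le_left hb0, mulVec_smul, smul_dotProduct, dotProduct_smul,
      smul_eq_mul, smul_eq_mul] at key
    rw [← hr2]
    calc _ = r ^ 2 * (r⁻¹ * (r⁻¹ * (M *ᵥ x ⬝ᵥ M *ᵥ x))) := by field_simp
      _ ≤ r ^ 2 * b ^ 2 := by gcongr
      _ = _ := by ring

lemma specNorm_transpose_mulVec {m n : ℕ} (M : Matrix (Fin m) (Fin n) ℝ) (b : ℝ)
    (hb : specNorm M ≤ b) (u : Fin m → ℝ) :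
    (Mᵀ *ᵥ u) ⬝ᵥ (Mᵀ *ᵥ u) ≤ b ^ 2 * (u ⬝ᵥ u) := by
  have h1 := specNorm_mulVec M b hb (Mᵀ *ᵥ u)
  set w := Mᵀ *ᵥ u with hw
  have hq : w ⬝ᵥ w = u ⬝ᵥ (M *ᵥ w) := by
    rw [dotProduct_mulVec u M, ← mulVec_transpose M]
  have hu0 : 0 ≤ u ⬝ᵥ u := by rw [dot_self_eq]; positivity
  have hw0 : 0 ≤ w ⬝ᵥ w := by rw [dot_self_eq]; positivity
  have cs : (u ⬝ᵥ (M *ᵥ w)) ^ 2 ≤ (u ⬝ᵥ u) * ((M *ᵥ w) ⬝ᵥ (M *ᵥ w)) := by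
    rw [dot_self_eq, dot_self_eq]
    exact Finset.sum_mul_sq_le_sq_mul_sq _ _ _
  rw [← hq] at cs
  rcases hw0.eq_or_lt with h | h
  · rw [← h]; positivity
  · have := mul_le_mul_of_nonneg_left h1 hu0
    nlinarith

lemma rayleigh_le {n : ℕ} (S : Matrix (Fin n) (Fin n) ℝ) (hS : S.IsHermitian) (w : Fin n → ℝ) :
    w ⬝ᵥ (S *ᵥ w) ≤ (⨆ i, hS.eigenvalues i) * (w ⬝ᵥ w) := by
  set U : Matrix (Fin n) (Fin n) ℝ := (hS.eigenvectorUnitary : Matrix (Fin n) (Fin n) ℝ) with hU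
  have hsp : S = U * diagonal hS.eigenvalues * Uᵀ := by
    have := hS.spectral_theorem
    rw [Unitary.conjStarAlgAut_apply] at this
    simpa [star_eq_conjTranspose] using this
  have hUU : U * Uᵀ = 1 := by
    have := Unitary.coe_mul_star_self hS.eigenvectorUnitary
    simpa [star_eq_conjTranspose] using this
  have e1 : w ⬝ᵥ (S *ᵥ w) = ∑ i, hS.eigenvalues i * (Uᵀ *ᵥ w) i ^ 2 := by
    conv_lhs => rw [hsp]
    rw [← mulVec_mulVec, ← mulVec_mulVec, dotProduct_mulVec, ← mulVec_transpose]
    simp only [dotProduct, mulVec_diagonal]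
    exact Finset.sum_congr rfl fun i _ => by ring
  have e2 : w ⬝ᵥ w = ∑ i, (Uᵀ *ᵥ w) i ^ 2 := by
    rw [← dot_self_eq]
    nth_rewrite 3 [← one_mulVec w]
    rw [dotProduct_mulVec, ← mulVec_transpose, transpose_transpose, mulVec_mulVec, hUU]
    simp
  rw [e1, e2, Finset.mul_sum]
  gcongr with i
  exact le_ciSup (Set.finite_range _).bddAbove i

/-- If `‖H_c‖ ≤ β`, `‖E‖ ≤ ρ`, `Σ ≻ 0`, `H = H_c + E`, `Ω_c = I_m + H_cΣH_cᵀ`,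
`Ω_H = I_m + HΣHᵀ`, then for every `η' > 0` and `y ∈ ℝ^m` with `(1/m)·yᵀΩ_c⁻¹y > 1 − η'`:
`yᵀΩ_H⁻¹y ≥ m · max(1−η',0) / (1 + ρ(ρ+2β)·λ_max(Σ))`. -/
theorem stmt10 (m n : ℕ) (Hc E : Matrix (Fin m) (Fin n) ℝ) (β ρ : ℝ)
    (hHc : specNorm Hc ≤ β) (hE : specNorm E ≤ ρ)
    (S : Matrix (Fin n) (Fin n) ℝ) (hS : S.PosDef)
    (η' : ℝ) (hη : 0 < η') (y : Fin m → ℝ)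
    (hy : 1 - η' <
      (1 / (m : ℝ)) * (y ⬝ᵥ (((1 : Matrix (Fin m) (Fin m) ℝ) + Hc * S * Hcᵀ)⁻¹ *ᵥ y))) :
    (m : ℝ) * max (1 - η') 0 /
        (1 + ρ * (ρ + 2 * β) * (⨆ i, hS.isHermitian.eigenvalues i))
      ≤ y ⬝ᵥ (((1 : Matrix (Fin m) (Fin m) ℝ) + (Hc + E) * S * (Hc + E)ᵀ)⁻¹ *ᵥ y) := by
  classical
  set L := ⨆ i, hS.isHermitian.eigenvalues i with hL
  have hβ : 0 ≤ β := (specNorm_nonneg' Hc).trans hHc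
  have hρ : 0 ≤ ρ := (specNorm_nonneg' E).trans hE
  have hL0 : 0 ≤ L := Real.iSup_nonneg fun i => hS.posSemidef.eigenvalues_nonneg i
  have pd : ∀ M : Matrix (Fin m) (Fin n) ℝ,
      ((1 : Matrix (Fin m) (Fin m) ℝ) + M * S * Mᵀ).PosDef := fun M =>
    PosDef.one.add_posSemidef (by simpa using hS.posSemidef.mul_mul_conjTranspose_same M)
  set A := (1 : Matrix (Fin m) (Fin m) ℝ) + (Hc + E) * S * (Hc + E)ᵀ with hA
  set B := (1 : Matrix (Fin m) (Fin m) ℝ) + Hc * S * Hcᵀ with hB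
  have hApd : A.PosDef := pd _
  have hBpd : B.PosDef := pd _
  set u := B⁻¹ *ᵥ y with hu
  set v := A⁻¹ *ᵥ y with hv
  have hBu : B *ᵥ u = y := by
    rw [hu, mulVec_mulVec, mul_nonsing_inv _ ((isUnit_iff_isUnit_det _).mp hBpd.isUnit),
      one_mulVec]
  have hAv : A *ᵥ v = y := by
    rw [hv, mulVec_mulVec, mul_nonsing_inv _ ((isUnit_iff_isUnit_det _).mp hApd.isUnit),
      one_mulVec]
  set c := 1 + ρ * (ρ + 2 * β) * L with hc
  have hc1 : 1 ≤ c := by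
    have : 0 ≤ ρ * (ρ + 2 * β) * L := by positivity
    linarith
  have quad : ∀ (M : Matrix (Fin m) (Fin n) ℝ), u ⬝ᵥ ((1 + M * S * Mᵀ) *ᵥ u)
      = u ⬝ᵥ u + (Mᵀ *ᵥ u) ⬝ᵥ (S *ᵥ (Mᵀ *ᵥ u)) := by
    intro M
    rw [add_mulVec, one_mulVec, dotProduct_add, ← mulVec_mulVec, ← mulVec_mulVec,
      dotProduct_mulVec u M, ← mulVec_transpose M]
  have hST : Sᵀ = S := by simpa using hS.isHermitian.eq
  have hAT : Aᵀ = A := by simpa using hApd.isHermitian.eq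
  have psd : ∀ w : Fin n → ℝ, 0 ≤ w ⬝ᵥ (S *ᵥ w) := fun w => by
    simpa using hS.posSemidef.dotProduct_mulVec_nonneg w
  have hAu : u ⬝ᵥ (A *ᵥ u) ≤ c * (u ⬝ᵥ (B *ᵥ u)) := by
    rw [hA, hB, quad, quad, transpose_add, add_mulVec]
    have ha := specNorm_transpose_mulVec Hc β hHc u
    have hb := specNorm_transpose_mulVec E ρ hE u
    set a := Hcᵀ *ᵥ u
    set b := Eᵀ *ᵥ u
    have hu0 : 0 ≤ u ⬝ᵥ u := by rw [dot_self_eq]; positivity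
    have sym : b ⬝ᵥ (S *ᵥ a) = a ⬝ᵥ (S *ᵥ b) := by
      rw [dotProduct_mulVec, ← mulVec_transpose, hST, dotProduct_comm]
    have haS : a ⬝ᵥ (S *ᵥ a) ≤ L * (β ^ 2 * (u ⬝ᵥ u)) :=
      (rayleigh_le S hS.isHermitian a).trans (by gcongr)
    have hbS : b ⬝ᵥ (S *ᵥ b) ≤ L * (ρ ^ 2 * (u ⬝ᵥ u)) :=
      (rayleigh_le S hS.isHermitian b).trans (by gcongr)
    have cross : a ⬝ᵥ (S *ᵥ b) ≤ L * (β * ρ * (u ⬝ᵥ u)) := by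
      have zero : ∀ z : Fin n → ℝ, z ⬝ᵥ z ≤ 0 → z = 0 := fun z hz =>
        dotProduct_self_eq_zero.mp (le_antisymm hz (by rw [dot_self_eq]; positivity))
      rcases hβ.eq_or_lt with h | h
      · have : a = 0 := zero a (by simpa [← h] using ha)
        rw [this, ← h]; simp
      rcases hρ.eq_or_lt with h' | h'
      · have : b = 0 := zero b (by simpa [← h'] using hb)
        rw [this, ← h']; simp
      have hp := psd (ρ • a - β • b)
      simp only [mulVec_sub, mulVec_smul, sub_dotProduct, dotProduct_sub, smul_dotProduct,
        dotProduct_smul, smul_eq_mul, sym] at hp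
      have h1 := mul_le_mul_of_nonneg_left haS (sq_nonneg ρ)
      have h2 := mul_le_mul_of_nonneg_left hbS (sq_nonneg β)
      have hpos : 0 < β * ρ := by positivity
      refine le_of_mul_le_mul_left ?_ hpos
      nlinarith
    have hpa := psd a
    simp only [mulVec_add, add_dotProduct, dotProduct_add, sym]
    have : 0 ≤ ρ * (ρ + 2 * β) * L * (a ⬝ᵥ (S *ᵥ a)) := by positivity
    rw [hc]
    nlinarith
  have hp : 0 ≤ (v - c⁻¹ • u) ⬝ᵥ (A *ᵥ (v - c⁻¹ • u)) := by
    simpa using hApd.posSemidef.dotProduct_mulVec_nonneg (v - c⁻¹ • u)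
  have hvAu : v ⬝ᵥ (A *ᵥ u) = y ⬝ᵥ u := by
    rw [dotProduct_mulVec, ← mulVec_transpose, hAT, hAv]
  simp only [mulVec_sub, mulVec_smul, sub_dotProduct, dotProduct_sub, smul_dotProduct,
    dotProduct_smul, smul_eq_mul, hAv, hvAu, dotProduct_comm v y, dotProduct_comm u y] at hp
  rw [hBu, dotProduct_comm u y] at hAu
  have hc0 : 0 < c := by linarith
  have main : (y ⬝ᵥ u) / c ≤ y ⬝ᵥ v := by
    have h1 : c⁻¹ * (c⁻¹ * (u ⬝ᵥ (A *ᵥ u))) ≤ c⁻¹ * (c⁻¹ * (c * (y ⬝ᵥ u))) := by gcongr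
    have h2 : c⁻¹ * (c⁻¹ * (c * (y ⬝ᵥ u))) = (y ⬝ᵥ u) / c := by field_simp
    have h3 : c⁻¹ * (y ⬝ᵥ u) = (y ⬝ᵥ u) / c := by field_simp
    linarith
  have hyu0 : 0 ≤ y ⬝ᵥ u := by
    have := hBpd.inv.posSemidef.dotProduct_mulVec_nonneg y
    simpa using this
  refine le_trans ?_ main
  gcongr
  rcases Nat.eq_zero_or_pos m with h | h
  · have : (m : ℝ) = 0 := by exact_mod_cast h
    rw [this, zero_mul]; exact hyu0
  · have hm : (0 : ℝ) < m := by exact_mod_cast h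
    rw [mul_max_of_nonneg _ _ hm.le, mul_zero]
    refine max_le ?_ hyu0
    have := mul_le_mul_of_nonneg_left hy.le hm.le
    rwa [← mul_assoc, mul_one_div_cancel hm.ne', one_mul] at this
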